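/- Let N, M ≥ 1, let A be a real N×N doubly stochastic matrix with spectral expansion λ(A) ≤ α and let B be a real M×M doubly stochastic matrix with spectral expansion λ(B) ≤ β, where α, β ∈ [0,1]. Let Ã be an NM×NM permutation matrix (indexed by pairs in [N]×[M]) satisfying P Ã P = A ⊗ ((1/M)J_M), where P = I_N ⊗ (1/M)J_M. Then for every integer k ≥ 2, the k-th power of Z′ = Ã (I_N ⊗ B) satisfies λ((Z′)^k) ≤ f′(α,β)^{k−1}; that is, for every x ∈ ℝ^{NM} orthogonal to the all-ones vector, ‖(Z′)^k x‖ ≤ f′(α,β)^{k−1}·‖x‖. -/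

import Mathlib

/-!
Write `P` for the orthogonal projection onto blockwise-constant vectors (`blockPar`) and
`Q = I ⊗ B`, and let `t = f'(α, β)`, the larger root of `t² = α (1 - β) t + β`.
The proof tracks the weighted energy `E(w) = ‖P w‖² + β ‖w - P w‖²` instead of the norm.

* One step of the walk contracts the energy: `E(Ã Q w) ≤ t² E(w)` for `w ⟂ 𝟙`
  (`energy_step`).  With `z = Q w`, `y = Ã z` one has `‖y‖ = ‖z‖` and
  `E(y) = (1 - β) ‖P y‖² + β ‖z‖²`.  Let `g = Ãᵀ P y`, so that `‖g‖ = ‖P y‖`.  Then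
  `‖P y‖² = ⟨g, z⟩ ≤ ‖P g‖ ‖P z‖ + ‖g - P g‖ ‖z - P z‖`, where `‖P g‖ ≤ α ‖P y‖` because
  `P Ã P` acts as `A` on block averages, and `‖z - P z‖ ≤ β ‖w - P w‖`.  What is left is the
  nonnegativity of a binary quadratic form in `‖P w‖` and `‖w - P w‖`, whose discriminant is
  controlled exactly by the equation for `t` (`scalar_bound`).
* The outermost factor `Ã Q` satisfies `‖Ã Q w‖² ≤ E(w)`, and `E(x) ≤ ‖x‖²`.

Hence `‖(Ã Q)^k x‖² ≤ E((Ã Q)^(k-1) x) ≤ t^(2(k-1)) ‖x‖²`.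
-/


open Matrix Kronecker

/-- Euclidean norm of a real vector. -/
noncomputable def euclNorm {n : Type*} [Fintype n] (x : n → ℝ) : ℝ :=
  Real.sqrt (∑ i, x i ^ 2)

/-- A real square matrix is doubly stochastic if its entries are nonnegative and
each row sum and each column sum equals 1. -/
def IsDoublyStochastic {n : Type*} [Fintype n] (A : Matrix n n ℝ) : Prop :=
  (∀ i j, 0 ≤ A i j) ∧ (∀ i, ∑ j, A i j = 1) ∧ (∀ j, ∑ i, A i j = 1)

/-- A permutation matrix. -/
def IsPermMatrix {n : Type*} [DecidableEq n] (A : Matrix n n ℝ) : Prop :=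
  ∃ σ : Equiv.Perm n, ∀ p q, A p q = if p = σ q then 1 else 0

/-- The function f(α,β₁,β₂) bounding the spectral expansion of the generalized
zig-zag product. -/
noncomputable def fZZ (α β₁ β₂ : ℝ) : ℝ :=
  (1 / 2) * (Real.sqrt (α ^ 2 * (1 - β₁ ^ 2) * (1 - β₂ ^ 2) + (β₁ + β₂) ^ 2)
           + Real.sqrt (α ^ 2 * (1 - β₁ ^ 2) * (1 - β₂ ^ 2) + (β₁ - β₂) ^ 2))

/-- The M×M all-ones matrix J_M. -/
def onesMat (M : ℕ) : Matrix (Fin M) (Fin M) ℝ := Matrix.of fun _ _ => 1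

/-- P = I_N ⊗ (1/M)·J_M, the orthogonal projection onto blockwise-constant vectors. -/
noncomputable def projP (N M : ℕ) : Matrix (Fin N × Fin M) (Fin N × Fin M) ℝ :=
  (1 : Matrix (Fin N) (Fin N) ℝ) ⊗ₖ ((M : ℝ)⁻¹ • onesMat M)

/-- The blockwise-constant part x^∥ of a vector indexed by [N]×[M]. -/
noncomputable def blockPar {N M : ℕ} (x : Fin N × Fin M → ℝ) : Fin N × Fin M → ℝ :=
  fun p => (∑ j, x (p.1, j)) / M

/-- The part x^⊥ = x − x^∥ of a vector indexed by [N]×[M]. -/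
noncomputable def blockPerp {N M : ℕ} (x : Fin N × Fin M → ℝ) : Fin N × Fin M → ℝ :=
  x - blockPar x

/-- The function f′(α,β) bounding powers of the reduced zig-zag product. -/
noncomputable def fZZ' (α β : ℝ) : ℝ :=
  (1 / 2) * α * (1 - β) + (1 / 2) * Real.sqrt (α ^ 2 * (1 - β) ^ 2 + 4 * β)

/-! ### The scalar inequality -/

lemma quad_nonneg (E F G a d : ℝ) (hE : 0 ≤ E) (hG : 0 ≤ G) (h : F ^ 2 ≤ E * G) :
    2 * F * a * d ≤ E * a ^ 2 + G * d ^ 2 := by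
  apply (abs_le_of_sq_le_sq' _ (by positivity)).2
  have h1 : F ^ 2 * (a * d) ^ 2 ≤ E * G * (a * d) ^ 2 :=
    mul_le_mul_of_nonneg_right h (sq_nonneg _)
  nlinarith [sq_nonneg (E * a ^ 2 - G * d ^ 2)]

lemma fZZ'_nonneg {α β : ℝ} (hα : 0 ≤ α) (hβ1 : β ≤ 1) : 0 ≤ fZZ' α β := by
  have : 0 ≤ 1 - β := by linarith
  unfold fZZ'
  positivity

lemma fZZ'_sq {α β : ℝ} (hβ0 : 0 ≤ β) :
    fZZ' α β ^ 2 = α * (1 - β) * fZZ' α β + β := by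
  have h := Real.sq_sqrt (show 0 ≤ α ^ 2 * (1 - β) ^ 2 + 4 * β by positivity)
  unfold fZZ'
  nlinarith

lemma le_fZZ' {α β : ℝ} (hα0 : 0 ≤ α) (hα1 : α ≤ 1) (hβ0 : 0 ≤ β) : α ≤ fZZ' α β := by
  have h : α * (1 + β) ≤ Real.sqrt (α ^ 2 * (1 - β) ^ 2 + 4 * β) := by
    apply Real.le_sqrt_of_sq_le
    have h1 : β * α ^ 2 ≤ β * 1 :=
      mul_le_mul_of_nonneg_left (pow_le_one₀ hα0 hα1) hβ0
    nlinarith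
  unfold fZZ'
  nlinarith

/-- The two-dimensional core of the energy estimate.  Here `X = ‖P y‖`, `r = ‖P g‖`,
`s = ‖g - P g‖`, `a = ‖P w‖`, `b = ‖z - P z‖` and `d = ‖w - P w‖`. -/
lemma scalar_bound {α β t X r s a b d : ℝ} (hα0 : 0 ≤ α) (hβ0 : 0 ≤ β)
    (hβ1 : β ≤ 1) (hαt : α ≤ t) (ht : t ^ 2 = α * (1 - β) * t + β)
    (hX : 0 ≤ X) (hr : 0 ≤ r) (hs : 0 ≤ s) (hb : 0 ≤ b)
    (hrs : r ^ 2 + s ^ 2 = X ^ 2) (hrX : r ≤ α * X) (hXX : X ^ 2 ≤ r * a + s * b)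
    (hbd : b ≤ β * d) :
    (1 - β) * X ^ 2 + β * (a ^ 2 + b ^ 2) ≤ t ^ 2 * (a ^ 2 + β * d ^ 2) := by
  have hβ' : 0 ≤ 1 - β := by linarith
  have ht0 : 0 ≤ t := hα0.trans hαt
  have hβt : β ≤ t ^ 2 := by rw [ht]; nlinarith [mul_nonneg (mul_nonneg hα0 hβ') ht0]
  have hb2 : b ^ 2 ≤ β ^ 2 * d ^ 2 := by
    rw [← mul_pow]; exact pow_le_pow_left₀ hb hbd 2
  obtain ⟨p, q, hp, hpα, hpq, hXpq⟩ : ∃ p q : ℝ, 0 ≤ p ∧ p ≤ α ∧ p ^ 2 + q ^ 2 ≤ 1 ∧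
      X ^ 2 ≤ (p * a + β * q * d) ^ 2 := by
    rcases hX.eq_or_lt with h0 | hpos
    · exact ⟨0, 0, le_refl _, hα0, by norm_num, by rw [← h0]; norm_num⟩
    · refine ⟨r / X, s / X, by positivity, by rwa [div_le_iff₀ hpos], ?_, ?_⟩
      · rw [div_pow, div_pow, ← add_div, hrs, div_self (by positivity)]
      · apply pow_le_pow_left₀ hX
        have h1 : X ^ 2 ≤ r * a + s * (β * d) :=
          hXX.trans (by gcongr)
        have h2 : r / X * a + β * (s / X) * d = (r * a + s * (β * d)) / X := by
          field_simp
        rw [h2, le_div_iff₀ hpos]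
        nlinarith
  have hp2 : p ^ 2 ≤ α ^ 2 := pow_le_pow_left₀ hp hpα 2
  have hE : 0 ≤ t ^ 2 - β - (1 - β) * p ^ 2 := by
    have h1 : (1 - β) * p ^ 2 ≤ (1 - β) * α ^ 2 := mul_le_mul_of_nonneg_left hp2 hβ'
    have h2 : 0 ≤ (α * (1 - β)) * (t - α) :=
      mul_nonneg (mul_nonneg hα0 hβ') (by linarith)
    nlinarith
  have hq2 : q ^ 2 ≤ 1 - p ^ 2 := by linarith
  have hG0 : 0 ≤ t ^ 2 - β ^ 2 - (1 - β) * β * (1 - p ^ 2) := by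
    have := mul_nonneg (mul_nonneg hβ' hβ0) (sq_nonneg p)
    nlinarith
  have hG1 : (1 - β) * β * q ^ 2 ≤ (1 - β) * β * (1 - p ^ 2) :=
    mul_le_mul_of_nonneg_left hq2 (mul_nonneg hβ' hβ0)
  have hG : 0 ≤ β * (t ^ 2 - β ^ 2 - (1 - β) * β * q ^ 2) :=
    mul_nonneg hβ0 (by linarith)
  -- Squaring the equation for `t` turns the discriminant into a multiple of `α² - p²`.
  have ht4 : (t ^ 2 - β) ^ 2 = α ^ 2 * (1 - β) ^ 2 * t ^ 2 := by
    rw [show t ^ 2 - β = α * (1 - β) * t by linarith]; ring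
  have hdet : ((1 - β) * β * p * q) ^ 2 ≤
      (t ^ 2 - β - (1 - β) * p ^ 2) * (β * (t ^ 2 - β ^ 2 - (1 - β) * β * q ^ 2)) := by
    have e : (t ^ 2 - β - (1 - β) * p ^ 2) * (β * (t ^ 2 - β ^ 2 - (1 - β) * β * q ^ 2))
        - ((1 - β) * β * p * q) ^ 2 = β * ((α ^ 2 - p ^ 2) * (1 - β) ^ 2 * t ^ 2)
          + β * ((1 - β) * β * (t ^ 2 - β) * (1 - p ^ 2 - q ^ 2)) := by
      linear_combination β * ht4
    have h1 : 0 ≤ β * ((α ^ 2 - p ^ 2) * (1 - β) ^ 2 * t ^ 2) := by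
      have : 0 ≤ α ^ 2 - p ^ 2 := by linarith
      positivity
    have h2 : 0 ≤ β * ((1 - β) * β * (t ^ 2 - β) * (1 - p ^ 2 - q ^ 2)) := by
      have h3 : 0 ≤ t ^ 2 - β := by linarith
      have h4 : 0 ≤ 1 - p ^ 2 - q ^ 2 := by linarith
      positivity
    linarith
  have key := quad_nonneg _ _ _ a d hE hG hdet
  have k1 := mul_le_mul_of_nonneg_left hXpq hβ'
  have k2 := mul_le_mul_of_nonneg_left hb2 hβ0
  nlinarith

/-! ### Euclidean norm and block decomposition -/

lemma euclNorm_nonneg {n : Type*} [Fintype n] (x : n → ℝ) : 0 ≤ euclNorm x :=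
  Real.sqrt_nonneg _

lemma euclNorm_sq {n : Type*} [Fintype n] (x : n → ℝ) : euclNorm x ^ 2 = x ⬝ᵥ x := by
  unfold euclNorm
  rw [Real.sq_sqrt (Finset.sum_nonneg fun i _ => sq_nonneg _)]
  simp [dotProduct, sq]

lemma dotProduct_le_euclNorm {n : Type*} [Fintype n] (x y : n → ℝ) :
    x ⬝ᵥ y ≤ euclNorm x * euclNorm y :=
  Real.sum_mul_le_sqrt_mul_sqrt _ _ _

section Blocks

variable {N M : ℕ}

lemma projP_mulVec (x : Fin N × Fin M → ℝ) : projP N M *ᵥ x = blockPar x := by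
  ext ⟨n, m⟩
  simp [projP, blockPar, onesMat, mulVec, dotProduct, Fintype.sum_prod_type, one_apply,
    ite_mul, div_eq_inv_mul, Finset.mul_sum]
  rw [Finset.sum_comm]
  simp

lemma blockPar_dotProduct (x y : Fin N × Fin M → ℝ) :
    blockPar x ⬝ᵥ y = x ⬝ᵥ blockPar y := by
  simp only [dotProduct, blockPar, Fintype.sum_prod_type]
  refine Finset.sum_congr rfl fun n _ => ?_
  rw [← Finset.mul_sum, ← Finset.sum_mul]
  ring

lemma blockPar_idem (hM : 1 ≤ M) (x : Fin N × Fin M → ℝ) :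
    blockPar (blockPar x) = blockPar x := by
  have : (M : ℝ) ≠ 0 := by positivity
  ext ⟨n, m⟩
  simp only [blockPar, Finset.sum_const, Finset.card_univ, Fintype.card_fin, nsmul_eq_mul]
  field_simp

lemma sum_blockPar (hM : 1 ≤ M) (x : Fin N × Fin M → ℝ) :
    ∑ p, blockPar x p = ∑ p, x p := by
  have : (M : ℝ) ≠ 0 := by positivity
  simp only [blockPar, Fintype.sum_prod_type, Finset.sum_const, Finset.card_univ,
    Fintype.card_fin, nsmul_eq_mul]
  refine Finset.sum_congr rfl fun n _ => ?_
  field_simp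

lemma dotProduct_split (hM : 1 ≤ M) (x y : Fin N × Fin M → ℝ) :
    x ⬝ᵥ y = blockPar x ⬝ᵥ blockPar y + blockPerp x ⬝ᵥ blockPerp y := by
  have h : blockPar x ⬝ᵥ blockPar y = x ⬝ᵥ blockPar y := by
    rw [blockPar_dotProduct, blockPar_idem hM]
  simp only [blockPerp, sub_dotProduct, dotProduct_sub, blockPar_dotProduct x y]
  rw [h]; ring

lemma euclNorm_sq_split (hM : 1 ≤ M) (x : Fin N × Fin M → ℝ) :
    euclNorm x ^ 2 = euclNorm (blockPar x) ^ 2 + euclNorm (blockPerp x) ^ 2 := by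
  simp only [euclNorm_sq]
  exact dotProduct_split hM x x

/-! ### The factor `I ⊗ B` -/

lemma one_kron_mulVec (B : Matrix (Fin M) (Fin M) ℝ) (x : Fin N × Fin M → ℝ)
    (n : Fin N) (m : Fin M) :
    (((1 : Matrix (Fin N) (Fin N) ℝ) ⊗ₖ B) *ᵥ x) (n, m) = (B *ᵥ fun j => x (n, j)) m := by
  simp [mulVec, dotProduct, Fintype.sum_prod_type, one_apply]

lemma blockPar_kron (B : Matrix (Fin M) (Fin M) ℝ) (hB : IsDoublyStochastic B)
    (x : Fin N × Fin M → ℝ) :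
    blockPar (((1 : Matrix (Fin N) (Fin N) ℝ) ⊗ₖ B) *ᵥ x) = blockPar x := by
  ext ⟨n, m⟩
  simp only [blockPar, one_kron_mulVec]
  congr 1
  simp only [mulVec, dotProduct]
  rw [Finset.sum_comm]
  simp [← Finset.sum_mul, hB.2.2]

lemma kron_blockPar (B : Matrix (Fin M) (Fin M) ℝ) (hB : IsDoublyStochastic B)
    (x : Fin N × Fin M → ℝ) :
    ((1 : Matrix (Fin N) (Fin N) ℝ) ⊗ₖ B) *ᵥ (blockPar x) = blockPar x := by
  ext ⟨n, m⟩
  rw [one_kron_mulVec]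
  simp [mulVec, dotProduct, blockPar, ← Finset.sum_mul, hB.2.1]

lemma blockPerp_kron (B : Matrix (Fin M) (Fin M) ℝ) (hB : IsDoublyStochastic B)
    (x : Fin N × Fin M → ℝ) :
    blockPerp (((1 : Matrix (Fin N) (Fin N) ℝ) ⊗ₖ B) *ᵥ x) =
      ((1 : Matrix (Fin N) (Fin N) ℝ) ⊗ₖ B) *ᵥ (blockPerp x) := by
  unfold blockPerp
  rw [mulVec_sub, kron_blockPar B hB, blockPar_kron B hB]

lemma euclNorm_blockPerp_kron (hM : 1 ≤ M) {β : ℝ} (hβ : 0 ≤ β)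
    (B : Matrix (Fin M) (Fin M) ℝ) (hB : IsDoublyStochastic B)
    (hBβ : ∀ v : Fin M → ℝ, ∑ k, v k = 0 → euclNorm (B.mulVec v) ≤ β * euclNorm v)
    (x : Fin N × Fin M → ℝ) :
    euclNorm (blockPerp (((1 : Matrix (Fin N) (Fin N) ℝ) ⊗ₖ B) *ᵥ x)) ≤
      β * euclNorm (blockPerp x) := by
  have hM' : (M : ℝ) ≠ 0 := by positivity
  rw [blockPerp_kron B hB]
  apply abs_le_of_sq_le_sq' _ (mul_nonneg hβ (euclNorm_nonneg _)) |>.2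
  rw [mul_pow, euclNorm_sq, euclNorm_sq]
  simp only [dotProduct, Fintype.sum_prod_type, Finset.mul_sum, one_kron_mulVec]
  refine Finset.sum_le_sum fun n _ => ?_
  have h0 : ∑ j, blockPerp x (n, j) = 0 := by
    simp only [blockPerp, blockPar, Pi.sub_apply, Finset.sum_sub_distrib, Finset.sum_const,
      Finset.card_univ, Fintype.card_fin, nsmul_eq_mul]
    field_simp
    ring
  have h1 := pow_le_pow_left₀ (euclNorm_nonneg _) (hBβ _ h0) 2
  rw [mul_pow, euclNorm_sq, euclNorm_sq] at h1
  simpa only [dotProduct, Finset.mul_sum] using h1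

/-! ### The permutation factor -/

lemma perm_mulVec {n : Type*} [Fintype n] [DecidableEq n] {T : Matrix n n ℝ}
    {σ : Equiv.Perm n} (hσ : ∀ p q, T p q = if p = σ q then 1 else 0) (x : n → ℝ) (p : n) :
    (T *ᵥ x) (σ p) = x p := by
  simp [mulVec, dotProduct, hσ]

lemma perm_dotProduct {n : Type*} [Fintype n] [DecidableEq n] {T : Matrix n n ℝ}
    {σ : Equiv.Perm n} (hσ : ∀ p q, T p q = if p = σ q then 1 else 0) (x y : n → ℝ) :
    y ⬝ᵥ (T *ᵥ x) = (y ∘ σ) ⬝ᵥ x := by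
  simp only [dotProduct]
  rw [← Equiv.sum_comp σ]
  simp [perm_mulVec hσ]

lemma perm_sum {n : Type*} [Fintype n] [DecidableEq n] {T : Matrix n n ℝ}
    {σ : Equiv.Perm n} (hσ : ∀ p q, T p q = if p = σ q then 1 else 0) (x : n → ℝ) :
    ∑ p, (T *ᵥ x) p = ∑ p, x p := by
  rw [← Equiv.sum_comp σ]
  simp [perm_mulVec hσ]

lemma euclNorm_comp_perm {n : Type*} [Fintype n] (σ : Equiv.Perm n) (x : n → ℝ) :
    euclNorm (x ∘ σ) = euclNorm x := by
  unfold euclNorm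
  rw [← Equiv.sum_comp σ (fun i => x i ^ 2)]
  rfl

lemma euclNorm_perm {n : Type*} [Fintype n] [DecidableEq n] {T : Matrix n n ℝ}
    {σ : Equiv.Perm n} (hσ : ∀ p q, T p q = if p = σ q then 1 else 0) (x : n → ℝ) :
    euclNorm (T *ᵥ x) = euclNorm x := by
  rw [← euclNorm_comp_perm σ]
  congr 1
  ext p
  exact perm_mulVec hσ x p

/-- On block averages the compression `P Ã P` acts as `A`, so it inherits the bound `α`. -/
lemma euclNorm_compression {α : ℝ} (hα : 0 ≤ α)
    (A : Matrix (Fin N) (Fin N) ℝ)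
    (hAα : ∀ v : Fin N → ℝ, ∑ i, v i = 0 → euclNorm (A.mulVec v) ≤ α * euclNorm v)
    (Atil : Matrix (Fin N × Fin M) (Fin N × Fin M) ℝ)
    (hrot : projP N M * Atil * projP N M = A ⊗ₖ ((M : ℝ)⁻¹ • onesMat M))
    (x : Fin N × Fin M → ℝ) (hx : ∑ p, x p = 0) :
    euclNorm (blockPar (Atil *ᵥ blockPar x)) ≤ α * euclNorm (blockPar x) := by
  have e : blockPar (Atil *ᵥ blockPar x) = (A ⊗ₖ ((M : ℝ)⁻¹ • onesMat M)) *ᵥ x := by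
    rw [← hrot, ← mulVec_mulVec, ← mulVec_mulVec, projP_mulVec, projP_mulVec]
  have e2 : ∀ n m, ((A ⊗ₖ ((M : ℝ)⁻¹ • onesMat M)) *ᵥ x) (n, m) =
      (A *ᵥ fun i => (∑ j, x (i, j)) / M) n := by
    intro n m
    simp only [mulVec, dotProduct, Fintype.sum_prod_type, kroneckerMap_apply, Matrix.smul_apply,
      onesMat, of_apply, smul_eq_mul, mul_one]
    refine Finset.sum_congr rfl fun i _ => ?_
    rw [← Finset.mul_sum]
    ring
  have h0 : ∑ i, (∑ j, x (i, j)) / (M : ℝ) = 0 := by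
    rw [← Finset.sum_div, ← Fintype.sum_prod_type, hx, zero_div]
  have h1 := pow_le_pow_left₀ (euclNorm_nonneg _) (hAα _ h0) 2
  rw [mul_pow, euclNorm_sq, euclNorm_sq] at h1
  apply abs_le_of_sq_le_sq' _ (mul_nonneg hα (euclNorm_nonneg _)) |>.2
  rw [mul_pow, euclNorm_sq, euclNorm_sq, e]
  simp only [dotProduct, Fintype.sum_prod_type, e2, blockPar, Finset.sum_const,
    Finset.card_univ, Fintype.card_fin, nsmul_eq_mul] at h1 ⊢
  rw [← Finset.mul_sum, ← Finset.mul_sum]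
  nlinarith [mul_le_mul_of_nonneg_left h1 (Nat.cast_nonneg (α := ℝ) M)]

/-! ### Energy decay -/

/-- The weighted energy `‖P x‖² + β ‖x - P x‖²`. -/
noncomputable def blockEnergy (β : ℝ) (x : Fin N × Fin M → ℝ) : ℝ :=
  euclNorm (blockPar x) ^ 2 + β * euclNorm (blockPerp x) ^ 2

lemma blockEnergy_le (hM : 1 ≤ M) {β : ℝ} (hβ : β ≤ 1) (x : Fin N × Fin M → ℝ) :
    blockEnergy β x ≤ euclNorm x ^ 2 := by
  rw [euclNorm_sq_split hM, blockEnergy]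
  nlinarith [sq_nonneg (euclNorm (blockPerp x))]

lemma energy_step (hM : 1 ≤ M) {α β : ℝ}
    (hα : α ∈ Set.Icc (0 : ℝ) 1) (hβ : β ∈ Set.Icc (0 : ℝ) 1)
    (A : Matrix (Fin N) (Fin N) ℝ)
    (hAα : ∀ v : Fin N → ℝ, ∑ i, v i = 0 → euclNorm (A.mulVec v) ≤ α * euclNorm v)
    (B : Matrix (Fin M) (Fin M) ℝ) (hB : IsDoublyStochastic B)
    (hBβ : ∀ v : Fin M → ℝ, ∑ k, v k = 0 → euclNorm (B.mulVec v) ≤ β * euclNorm v)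
    (Atil : Matrix (Fin N × Fin M) (Fin N × Fin M) ℝ) (hperm : IsPermMatrix Atil)
    (hrot : projP N M * Atil * projP N M = A ⊗ₖ ((M : ℝ)⁻¹ • onesMat M))
    (w : Fin N × Fin M → ℝ) (hw : ∑ p, w p = 0) :
    blockEnergy β (Atil *ᵥ (((1 : Matrix (Fin N) (Fin N) ℝ) ⊗ₖ B) *ᵥ w)) ≤
      fZZ' α β ^ 2 * blockEnergy β w := by
  obtain ⟨σ, hσ⟩ := hperm
  set z := ((1 : Matrix (Fin N) (Fin N) ℝ) ⊗ₖ B) *ᵥ w with hz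
  have hzp : blockPar z = blockPar w := blockPar_kron B hB w
  have hzb : euclNorm (blockPerp z) ≤ β * euclNorm (blockPerp w) :=
    euclNorm_blockPerp_kron hM hβ.1 B hB hBβ w
  have hzs : ∑ p, z p = 0 := by rw [← sum_blockPar hM, hzp, sum_blockPar hM, hw]
  set y := Atil *ᵥ z with hy
  have hys : ∑ p, y p = 0 := by rw [hy, perm_sum hσ, hzs]
  -- `g = Ãᵀ P y`
  set g : Fin N × Fin M → ℝ := blockPar y ∘ σ with hg
  have hgn : euclNorm g = euclNorm (blockPar y) := euclNorm_comp_perm σ _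
  have hgs : ∑ p, g p = 0 := by
    rw [← hys, ← sum_blockPar hM y]
    exact Equiv.sum_comp σ (blockPar y)
  have hrs := euclNorm_sq_split hM g
  rw [hgn] at hrs
  have hXX : euclNorm (blockPar y) ^ 2 ≤ euclNorm (blockPar g) * euclNorm (blockPar w)
      + euclNorm (blockPerp g) * euclNorm (blockPerp z) := by
    have h1 : euclNorm (blockPar y) ^ 2 = g ⬝ᵥ z := by
      rw [euclNorm_sq, ← blockPar_dotProduct, blockPar_idem hM, hg, ← perm_dotProduct hσ]
    rw [h1, dotProduct_split hM, ← hzp]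
    exact add_le_add (dotProduct_le_euclNorm _ _) (dotProduct_le_euclNorm _ _)
  -- Moving `Ã` back to the other side, `‖P g‖² = ⟨P y, P Ã P g⟩ ≤ ‖P y‖ · α ‖P g‖`.
  have hrX : euclNorm (blockPar g) ≤ α * euclNorm (blockPar y) := by
    have h1 : euclNorm (blockPar g) ^ 2 =
        blockPar y ⬝ᵥ blockPar (Atil *ᵥ blockPar g) := by
      rw [← blockPar_dotProduct, blockPar_idem hM, perm_dotProduct hσ, euclNorm_sq,
        blockPar_dotProduct, blockPar_idem hM]
    have h2 := dotProduct_le_euclNorm (blockPar y) (blockPar (Atil *ᵥ blockPar g))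
    have h3 := euclNorm_compression hα.1 A hAα Atil hrot g hgs
    have h4 := mul_le_mul_of_nonneg_left h3 (euclNorm_nonneg (blockPar y))
    rcases (euclNorm_nonneg (blockPar g)).eq_or_lt with h0 | hpos
    · rw [← h0]; exact mul_nonneg hα.1 (euclNorm_nonneg _)
    · refine le_of_mul_le_mul_right ?_ hpos
      nlinarith
  have hmain := scalar_bound hα.1 hβ.1 hβ.2 (le_fZZ' hα.1 hα.2 hβ.1) (fZZ'_sq hβ.1)
    (euclNorm_nonneg _) (euclNorm_nonneg _) (euclNorm_nonneg _) (euclNorm_nonneg _) hrs.symm hrX hXX hzb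
  have hyz : euclNorm y ^ 2 = euclNorm z ^ 2 := by rw [hy, euclNorm_perm hσ]
  rw [euclNorm_sq_split hM y, euclNorm_sq_split hM z, hzp] at hyz
  unfold blockEnergy
  rw [← hyz] at hmain
  linarith

end Blocks

theorem reduced_zigzag_power_spectral_bound
    (N M : ℕ) (hN : 1 ≤ N) (hM : 1 ≤ M) (α β : ℝ)
    (hα : α ∈ Set.Icc (0 : ℝ) 1) (hβ : β ∈ Set.Icc (0 : ℝ) 1)
    (A : Matrix (Fin N) (Fin N) ℝ) (hA : IsDoublyStochastic A)
    (hAα : ∀ v : Fin N → ℝ, ∑ i, v i = 0 → euclNorm (A.mulVec v) ≤ α * euclNorm v)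
    (B : Matrix (Fin M) (Fin M) ℝ) (hB : IsDoublyStochastic B)
    (hBβ : ∀ v : Fin M → ℝ, ∑ k, v k = 0 → euclNorm (B.mulVec v) ≤ β * euclNorm v)
    (Atil : Matrix (Fin N × Fin M) (Fin N × Fin M) ℝ) (hperm : IsPermMatrix Atil)
    (hrot : projP N M * Atil * projP N M = A ⊗ₖ ((M : ℝ)⁻¹ • onesMat M)) :
    ∀ k : ℕ, 2 ≤ k → ∀ x : Fin N × Fin M → ℝ, ∑ p, x p = 0 →
      euclNorm (((Atil * ((1 : Matrix (Fin N) (Fin N) ℝ) ⊗ₖ B)) ^ k).mulVec x)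
        ≤ fZZ' α β ^ (k - 1) * euclNorm x := by
  set Z := Atil * ((1 : Matrix (Fin N) (Fin N) ℝ) ⊗ₖ B) with hZ
  have hZv : ∀ w, Z *ᵥ w = Atil *ᵥ (((1 : Matrix (Fin N) (Fin N) ℝ) ⊗ₖ B) *ᵥ w) :=
    fun w => (mulVec_mulVec w _ _).symm
  intro k hk x hx
  have hsum : ∀ w : Fin N × Fin M → ℝ, ∑ p, (Z *ᵥ w) p = ∑ p, w p := by
    intro w
    obtain ⟨σ, hσ⟩ := hperm
    rw [hZv, perm_sum hσ, ← sum_blockPar hM, blockPar_kron B hB, sum_blockPar hM]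
  have hpow : ∀ j : ℕ, ∑ p, ((Z ^ j) *ᵥ x) p = 0 ∧
      blockEnergy β ((Z ^ j) *ᵥ x) ≤ (fZZ' α β ^ j) ^ 2 * blockEnergy β x := by
    intro j
    induction j with
    | zero => simp [hx]
    | succ j ih =>
      rw [pow_succ', ← mulVec_mulVec]
      refine ⟨by rw [hsum, ih.1], ?_⟩
      have h1 := energy_step hM hα hβ A hAα B hB hBβ Atil hperm hrot _ ih.1
      rw [← hZv] at h1
      refine h1.trans ((mul_le_mul_of_nonneg_left ih.2 (sq_nonneg _)).trans_eq ?_)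
      ring
  obtain ⟨j, rfl⟩ : ∃ j, k = j + 1 := ⟨k - 1, by omega⟩
  rw [Nat.add_sub_cancel]
  have hf := fZZ'_nonneg hα.1 hβ.2
  apply abs_le_of_sq_le_sq' _ (mul_nonneg (pow_nonneg hf _) (euclNorm_nonneg _)) |>.2
  -- The outermost factor maps energy to norm: `‖Z u‖² = ‖P u‖² + ‖Q (u - P u)‖² ≤ E(u)`,
  -- since `β² ≤ β`.
  have hlast : ∀ u : Fin N × Fin M → ℝ, euclNorm (Z *ᵥ u) ^ 2 ≤ blockEnergy β u := by
    intro u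
    obtain ⟨σ, hσ⟩ := hperm
    rw [hZv, euclNorm_perm hσ, euclNorm_sq_split hM, blockPar_kron B hB, blockEnergy]
    have h1 := pow_le_pow_left₀ (euclNorm_nonneg _)
      (euclNorm_blockPerp_kron hM hβ.1 B hB hBβ u) 2
    have h2 : β ^ 2 ≤ β := by nlinarith [hβ.1, hβ.2]
    have h3 := mul_le_mul_of_nonneg_right h2 (sq_nonneg (euclNorm (blockPerp u)))
    nlinarith
  rw [pow_succ' Z, ← mulVec_mulVec, mul_pow]
  exact (hlast _).trans ((hpow j).2.trans
    (mul_le_mul_of_nonneg_left (blockEnergy_le hM hβ.2 x) (sq_nonneg _)))
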